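/- Let L = (L₁, …, L_r) and L' = (L'₁, …, L'_r) be two frames for E. Then there exists a permutation π of {1, …, r} such that for every subspace V of E that is adapted to both frames (i.e., V is a sum of some of the L_i and also a sum of some of the L'_j), one has V = Σ_{i : L_i ⊆ V} L'_{π(i)}. In particular, the simplicial isomorphism between the two apartments induced by L_i ↦ L'_{π(i)} fixes every flag adapted to both L and L'. -/

import Mathlib

/-- A frame for `E`: a family of one-dimensional subspaces whose internal direct sum is `E`. -/
def IsFrame (K : Type*) {E : Type*} [Field K] [AddCommGroup E] [Module K E]
    {r : ℕ} (L : Fin r → Submodule K E) : Prop :=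
  (∀ i, Module.finrank K (L i) = 1) ∧ iSupIndep L ∧ (⨆ i, L i) = ⊤

/-!
Pick bases `b` and `b'` spanning the lines of the two frames, and let the signature of an index be
the set of adapted subspaces containing the corresponding basis vector. It suffices to match the
indices of `b` with those of `b'` preserving signatures, that is, to see that the two fibers over
each signature `S` are equipotent. Let `A` be the intersection of the adapted subspaces in `S` and
`B` the sum of those not in `S`. Both are adapted, and the basis vectors of signature `S` are
exactly those in `A` but not in `B`; they descend to a basis of the image of `A` in `E ⧸ B`, whose
cardinality is the same for `b` and `b'`.
-/

open Module Submodule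

section Adapted

variable {R E ι κ : Type*}

/-- A submodule `V` is adapted to a family of vectors `v` if it is spanned by some of them. For the
lines `Lᵢ` spanned by `v i` this says that `V` is a sum of some of the `Lᵢ`. -/
def IsAdapted [Semiring R] [AddCommMonoid E] [Module R E] (v : ι → E) (V : Submodule R E) : Prop :=
  ∃ s : Set ι, V = span R (v '' s)

namespace IsAdapted

section Semiring

variable [Semiring R] [AddCommMonoid E] [Module R E]

theorem span_image_eq {v : ι → E} {V : Submodule R E} (hV : IsAdapted v V) :
    span R (v '' {i | v i ∈ V}) = V := by
  refine le_antisymm (span_le.2 <| Set.image_subset_iff.2 fun _ hi => hi) ?_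
  obtain ⟨s, rfl⟩ := hV
  exact span_mono <| Set.image_mono fun i hi => subset_span <| Set.mem_image_of_mem v hi

protected theorem iSup {v : ι → E} {V : κ → Submodule R E} (hV : ∀ k, IsAdapted v (V k)) :
    IsAdapted v (⨆ k, V k) := by
  choose s hs using hV
  exact ⟨⋃ k, s k, by simp only [hs, Set.image_iUnion, span_iUnion]⟩

protected theorem iInf {b : Basis ι R E} {V : κ → Submodule R E} (hV : ∀ k, IsAdapted b (V k)) :
    IsAdapted b (⨅ k, V k) := by
  choose s hs using hV
  refine ⟨⋂ k, s k, Submodule.ext fun x => ?_⟩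
  simp only [hs, mem_iInf, Basis.mem_span_image, Set.subset_iInter_iff]

theorem apply_mem_iSup_iff [Nontrivial R] {b : Basis ι R E} {V : κ → Submodule R E}
    (hV : ∀ k, IsAdapted b (V k)) {i : ι} : b i ∈ ⨆ k, V k ↔ ∃ k, b i ∈ V k := by
  choose s hs using hV
  simp only [hs, ← span_iUnion, ← Set.image_iUnion, Basis.self_mem_span_image, Set.mem_iUnion]

theorem setOf_apply_mem_eq_iff [Nontrivial R] {b : Basis ι R E} {V : κ → Submodule R E}
    (hV : ∀ k, IsAdapted b (V k)) (S : Set κ) (i : ι) :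
    {k | b i ∈ V k} = S ↔ b i ∈ ⨅ k : S, V k ∧ b i ∉ ⨆ k : ↥Sᶜ, V k := by
  rw [apply_mem_iSup_iff fun k : ↥Sᶜ => hV k, mem_iInf, Set.Subset.antisymm_iff, and_comm]
  refine and_congr (by simp [Set.subset_def]) ?_
  simp [Set.subset_def, not_imp_not]

end Semiring

section Ring

variable [Ring R] [AddCommGroup E] [Module R E] {V W : Submodule R E}

theorem linearIndependent_mkQ {b : Basis ι R E} (hW : IsAdapted b W) :
    LinearIndependent R fun i : {i // b i ∉ W} => W.mkQ (b i) := by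
  refine (b.linearIndependent.comp _ Subtype.val_injective).map ?_
  rw [ker_mkQ, Set.range_comp, Subtype.range_coe_subtype]
  nth_rw 2 [← hW.span_image_eq]
  exact b.linearIndependent.disjoint_span_image disjoint_compl_left

theorem span_range_mkQ {v : ι → E} (hV : IsAdapted v V) (W : Submodule R E) :
    span R (Set.range fun i : {i // v i ∈ V ∧ v i ∉ W} => W.mkQ (v i)) = V.map W.mkQ := by
  refine le_antisymm (span_le.2 ?_) ?_
  · rintro _ ⟨i, rfl⟩
    exact mem_map_of_mem i.2.1
  · nth_rw 1 [← hV.span_image_eq]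
    rw [map_span_le]
    rintro _ ⟨i, hiV, rfl⟩
    by_cases hiW : v i ∈ W
    · simp [(Quotient.mk_eq_zero W).2 hiW]
    · exact subset_span ⟨⟨i, hiV, hiW⟩, rfl⟩

theorem nonempty_basis_map_mkQ {b : Basis ι R E} (hV : IsAdapted b V) (hW : IsAdapted b W) :
    Nonempty (Basis {i // b i ∈ V ∧ b i ∉ W} R (V.map W.mkQ)) := by
  have hli : LinearIndependent R fun i : {i // b i ∈ V ∧ b i ∉ W} => W.mkQ (b i) :=
    hW.linearIndependent_mkQ.comp (Subtype.map id fun _ hi => hi.2)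
      (Subtype.map_injective _ Function.injective_id)
  exact ⟨(Basis.span hli).map (LinearEquiv.ofEq _ _ (hV.span_range_mkQ W))⟩

end Ring

end IsAdapted

section InvariantBasisNumber

variable {ι' : Type*} [Ring R] [InvariantBasisNumber R] [AddCommGroup E] [Module R E]

theorem exists_equiv_apply_mem_iff {b : Basis ι R E} {b' : Basis ι' R E} {V : κ → Submodule R E}
    (hV : ∀ k, IsAdapted b (V k)) (hV' : ∀ k, IsAdapted b' (V k)) :
    ∃ π : ι ≃ ι', ∀ i k, b' (π i) ∈ V k ↔ b i ∈ V k := by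
  have : Nontrivial R := nontrivial_of_invariantBasisNumber R
  have fiberEquiv (S : Set κ) :
      Nonempty ({i // {k | b i ∈ V k} = S} ≃ {j // {k | b' j ∈ V k} = S}) := by
    simp only [IsAdapted.setOf_apply_mem_eq_iff hV, IsAdapted.setOf_apply_mem_eq_iff hV']
    obtain ⟨c⟩ := (IsAdapted.iInf fun k : S => hV k).nonempty_basis_map_mkQ
      (.iSup fun k : ↥Sᶜ => hV k)
    obtain ⟨c'⟩ := (IsAdapted.iInf fun k : S => hV' k).nonempty_basis_map_mkQ
      (.iSup fun k : ↥Sᶜ => hV' k)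
    exact ⟨c.indexEquiv c'⟩
  let e (S : Set κ) := (fiberEquiv S).some
  exact ⟨Equiv.ofFiberEquiv e, fun i => Set.ext_iff.1 (Equiv.ofFiberEquiv_map e i)⟩

theorem exists_equiv_span_image_eq (b : Basis ι R E) (b' : Basis ι' R E) :
    ∃ π : ι ≃ ι', ∀ V : Submodule R E, IsAdapted b V → IsAdapted b' V →
      span R ((fun i => b' (π i)) '' {i | b i ∈ V}) = V := by
  obtain ⟨π, hπ⟩ := exists_equiv_apply_mem_iff
    (V := fun V : {V : Submodule R E // IsAdapted b V ∧ IsAdapted b' V} => V.1)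
    (fun V => V.2.1) (fun V => V.2.2)
  refine ⟨π, fun V hV hV' => ?_⟩
  have image_eq : π '' {i | b i ∈ V} = {j | b' j ∈ V} := by
    simp only [← hπ _ ⟨V, hV, hV'⟩]
    exact π.image_preimage {j | b' j ∈ V}
  rw [← Set.image_image, image_eq, hV'.span_image_eq]

end InvariantBasisNumber

end Adapted

section Frame

theorem span_image_eq_biSup {R E ι : Type*} [Semiring R] [AddCommMonoid E] [Module R E]
    (v : ι → E) (s : Set ι) : span R (v '' s) = ⨆ i ∈ s, span R {v i} := by
  simp only [Set.image_eq_iUnion, span_iUnion₂]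

variable {K E ι ι' : Type*} [DivisionRing K] [AddCommGroup E] [Module K E]

theorem exists_basis_eq_span_singleton {L : ι → Submodule K E} (hrank : ∀ i, finrank K (L i) = 1)
    (hindep : iSupIndep L) (htop : ⨆ i, L i = ⊤) :
    ∃ b : Basis ι K E, L = fun i => span K {b i} := by
  have line_eq_span (i : ι) : ∃ v : E, v ≠ 0 ∧ L i = span K {v} :=
    (atom_iff_nonzero_span (L i)).1 <|
      isSimpleModule_iff_isAtom.1 <| isSimpleModule_iff_finrank_eq_one.2 (hrank i)
  choose v hv hL using line_eq_span
  have hli : LinearIndependent K v :=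
    hindep.linearIndependent L (fun i => hL i ▸ mem_span_singleton_self (v i)) hv
  have hspan : span K (Set.range v) = ⊤ := by simp only [span_range_eq_iSup, ← hL, htop]
  exact ⟨Basis.mk hli hspan.ge, funext fun i => by rw [Basis.mk_apply, hL]⟩

theorem stmt8_general {L : ι → Submodule K E} {L' : ι' → Submodule K E}
    (hrank : ∀ i, finrank K (L i) = 1) (hindep : iSupIndep L) (htop : ⨆ i, L i = ⊤)
    (hrank' : ∀ j, finrank K (L' j) = 1) (hindep' : iSupIndep L') (htop' : ⨆ j, L' j = ⊤) :
    ∃ π : ι ≃ ι', ∀ V : Submodule K E,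
      (∃ s : Set ι, V = ⨆ i ∈ s, L i) → (∃ t : Set ι', V = ⨆ j ∈ t, L' j) →
        V = ⨆ i ∈ {i | L i ≤ V}, L' (π i) := by
  obtain ⟨b, rfl⟩ := exists_basis_eq_span_singleton hrank hindep htop
  obtain ⟨b', rfl⟩ := exists_basis_eq_span_singleton hrank' hindep' htop'
  obtain ⟨π, hπ⟩ := exists_equiv_span_image_eq b b'
  refine ⟨π, fun V hV hV' => ?_⟩
  simp only [← span_image_eq_biSup, span_singleton_le_iff_mem] at hV hV' ⊢
  exact (hπ V hV hV').symm

end Frame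

/-- Given two frames `L`, `L'` for `E`, there is a permutation `π` of `{1, …, r}` such that
every subspace `V` adapted to both frames satisfies `V = Σ_{i : Lᵢ ⊆ V} L'_{π i}`; hence the
simplicial isomorphism `Lᵢ ↦ L'_{π i}` between the two apartments fixes every flag adapted
to both frames. -/
theorem stmt8 (K E : Type*) [Field K] [AddCommGroup E] [Module K E] [FiniteDimensional K E]
    (r : ℕ) (L L' : Fin r → Submodule K E)
    (hL : IsFrame K L) (hL' : IsFrame K L') :
    ∃ π : Equiv.Perm (Fin r),
      ∀ V : Submodule K E,
        (∃ s : Finset (Fin r), V = ⨆ i ∈ s, L i) →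
        (∃ s : Finset (Fin r), V = ⨆ i ∈ s, L' i) →
        V = ⨆ i ∈ {i : Fin r | L i ≤ V}, L' (π i) := by
  obtain ⟨π, hπ⟩ := stmt8_general hL.1 hL.2.1 hL.2.2 hL'.1 hL'.2.1 hL'.2.2
  exact ⟨π, fun V ⟨s, hs⟩ ⟨t, ht⟩ => hπ V ⟨s, hs⟩ ⟨t, ht⟩⟩
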